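/- arXiv:2312.10799 — 2 statements merged into one kernel-verified Lean document; each statement's English description precedes it below -/
import Mathlib

section
/- For every p ∈ ℍ and every nonzero q ∈ ℍ, there exists b ∈ ℍ with b² = -1 such that b·q commutes with p. -/
/-!
The elements commuting with `p` contain a plane spanned by `1` and some non-scalar `u`, so the
linear functional `z ↦ re (z * q⁻¹)` kills a nonzero `z` commuting with `p`. Then `z * q⁻¹` is a
nonzero pure quaternion; rescaling it to norm one gives `b`, and `b * q` is a scalar multiple
of `z`.
-/

open scoped Quaternion

theorem exists_notMem_range_algebraMap_commute {R A : Type*} [CommSemiring R] [Semiring A]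
    [Algebra R A] (hA : ¬ Function.Surjective (algebraMap R A)) (p : A) :
    ∃ u ∉ Set.range (algebraMap R A), Commute u p := by
  by_cases hp : p ∈ Set.range (algebraMap R A)
  · obtain ⟨r, rfl⟩ := hp
    obtain ⟨u, hu⟩ := not_forall.mp hA
    exact ⟨u, hu, Algebra.commute_algebraMap_right r u⟩
  · exact ⟨p, hp, Commute.refl p⟩

theorem exists_ne_zero_commute_map_eq_zero {K A : Type*} [Field K] [Ring A] [Algebra K A]
    (hA : ¬ Function.Surjective (algebraMap K A)) (f : A →ₗ[K] K) (p : A) :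
    ∃ z ≠ 0, Commute z p ∧ f z = 0 := by
  obtain ⟨u, hu, hup⟩ := exists_notMem_range_algebraMap_commute hA p
  by_cases hf : f 1 = 0
  · have : Nontrivial A := not_subsingleton_iff_nontrivial.mp fun _ ↦
      hu ⟨0, Subsingleton.elim _ _⟩
    exact ⟨1, one_ne_zero, Commute.one_left p, hf⟩
  · refine ⟨u - algebraMap K A (f u / f 1), ?_, ?_, ?_⟩
    · exact fun h ↦ hu ⟨_, (sub_eq_zero.mp h).symm⟩
    · exact hup.sub_left (Algebra.commute_algebraMap_left _ p)
    · rw [map_sub, Algebra.algebraMap_eq_smul_one, map_smul, smul_eq_mul, div_mul_cancel₀ _ hf,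
        sub_self]

theorem not_surjective_algebraMap_quaternion (R : Type*) [CommRing R] [Nontrivial R] :
    ¬ Function.Surjective (algebraMap R ℍ[R]) := by
  intro h
  obtain ⟨r, hr⟩ := h ⟨0, 1, 0, 0⟩
  exact zero_ne_one (congrArg QuaternionAlgebra.imI hr)

theorem isSumSq_quaternion_normSq {R : Type*} [CommRing R] (a : ℍ[R]) :
    IsSumSq (Quaternion.normSq a) := by
  rw [Quaternion.normSq_def']
  exact (((IsSquare.sq _).isSumSq.add (IsSquare.sq _).isSumSq).add
    (IsSquare.sq _).isSumSq).add (IsSquare.sq _).isSumSq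

section OrderedField

variable {K : Type*} [Field K] [LinearOrder K] [IsStrictOrderedRing K]

theorem exists_smul_sq_eq_neg_one {c : ℍ[K]} (hc : c ≠ 0) (hre : c.re = 0)
    (hsq : IsSquare (Quaternion.normSq c)) : ∃ r : K, (r • c) ^ 2 = -1 := by
  obtain ⟨s, hs⟩ := hsq
  have hnorm : Quaternion.normSq (s⁻¹ • c) = 1 := by
    rw [Quaternion.normSq_smul, inv_pow, sq, ← hs,
      inv_mul_cancel₀ (Quaternion.normSq_ne_zero.mpr hc)]
  have hpure : (s⁻¹ • c).re = 0 := by rw [Quaternion.re_smul, hre, smul_zero]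
  exact ⟨s⁻¹, by rw [Quaternion.sq_eq_neg_normSq.mpr hpure, hnorm, Quaternion.coe_one]⟩

theorem exists_sqrt_neg_one_commutes_general (hK : ∀ x : K, IsSumSq x → IsSquare x)
    (p q : ℍ[K]) (hq : q ≠ 0) :
    ∃ b : ℍ[K], b ^ 2 = -1 ∧ (b * q) * p = p * (b * q) := by
  obtain ⟨z, hz, hzp, (hre : (z * q⁻¹).re = 0)⟩ := exists_ne_zero_commute_map_eq_zero
    (not_surjective_algebraMap_quaternion K)
    (QuaternionAlgebra.reₗ (-1) 0 (-1) ∘ₗ LinearMap.mulRight K q⁻¹) p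
  obtain ⟨r, hr⟩ := exists_smul_sq_eq_neg_one (mul_ne_zero hz (inv_ne_zero hq)) hre
    (hK _ (isSumSq_quaternion_normSq _))
  have hrz : r • (z * q⁻¹) * q = r • z := by
    rw [smul_mul_assoc, inv_mul_cancel_right₀ hq]
  refine ⟨r • (z * q⁻¹), hr, ?_⟩
  rw [hrz]
  exact hzp.smul_left r

end OrderedField

theorem exists_sqrt_neg_one_commutes (p q : Quaternion ℝ) (hq : q ≠ 0) :
    ∃ b : Quaternion ℝ, b ^ 2 = -1 ∧ (b * q) * p = p * (b * q) :=
  exists_sqrt_neg_one_commutes_general (fun _ hx ↦ Real.isSquare_iff.mpr hx.nonneg) p q hq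
end

section
/- (Strengthened Nullstellensatz over ℍ, one variable) A polynomial F ∈ ℍ[x] vanishes on the zero locus 𝓥(I) of a left ideal I of ℍ[x] if and only if for every b ∈ ℍ with b² = -1 there exists N ≥ 1 such that (bF)^N ∈ I + I·(bF) + I·(bF)² + ⋯ + I·(bF)^N. -/
open Polynomial

/-!
Multiplying `F` on the left by a constant does not destroy its vanishing on `𝓥(I)`, so for one
direction it suffices to find a power of `F` in the smallest left ideal `J = I + I·F + I·F² + ⋯`
that contains `I` and is stable under right multiplication by `F`. A maximal left ideal `Q` of
`ℍ[x]` is the vanishing ideal of a point: on the simple module `ℍ[x] ⧸ Q`, a finite-dimensional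
complex vector space, `x` has an eigenvector `v`, say `x v = c v`. The line `ℍ v` is a submodule,
hence everything, so `1 = d v` for some `d`, and then `x - d c d⁻¹` kills `1`. It follows that `F`
lies in the Jacobson radical of `J`. If `J = 0`, this radical is zero. Otherwise `ℍ[x] ⧸ J` is
Artinian, so `Fⁿ ≡ w Fⁿ⁺¹` modulo `J` for some `n` and `w`; since `1 - w F` has a left inverse `z`
modulo `J` and `J F ⊆ J`, we get `Fⁿ ≡ z (1 - w F) Fⁿ ≡ 0`.

Conversely, `(G F)(p) = G(p) F(p)` as soon as `p` commutes with `F(p)`. If `c = F(p) ≠ 0`, there is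
`b` with `b² = -1` such that `p` commutes with `b c`: the centralizer of `p` has real dimension at
least two, so it contains some `u ≠ 0` with `u c⁻¹` purely imaginary, and `b` is `u c⁻¹` normalized.
-/

section Semiring

variable {R : Type*} [Semiring R]

theorem eval_mul_of_semiconjBy {f g : R[X]} {p q : R} (h : SemiconjBy (g.eval p) p q) :
    (f * g).eval p = f.eval q * g.eval p := by
  induction f using Polynomial.induction_on' with
  | add f₁ f₂ h₁ h₂ => rw [add_mul, eval_add, h₁, h₂, eval_add, add_mul]
  | monomial n a =>
    rw [← C_mul_X_pow_eq_monomial, mul_assoc, X_pow_mul, eval_C_mul, eval_mul_X_pow,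
      (h.pow_right n).eq, eval_C_mul, eval_X_pow, mul_assoc]

theorem eval_pow_of_commute {f : R[X]} {p : R} (h : Commute (f.eval p) p) (n : ℕ) :
    (f ^ n).eval p = f.eval p ^ n := by
  induction n with
  | zero => simp
  | succ n ih => rw [pow_succ, eval_mul_of_semiconjBy h, ih, pow_succ]

/-- The zero locus `𝓥(I)` of a left ideal, with respect to left evaluation. -/
def leftZeroLocus (I : Ideal R[X]) : Set R :=
  {p | ∀ f ∈ I, f.eval p = 0}

theorem eval_eq_zero_of_pow_eq_sum [IsReduced R] {I : Ideal R[X]} {f : R[X]} {p : R}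
    (hp : p ∈ leftZeroLocus I) (hf : Commute (f.eval p) p) {N : ℕ} {g : Fin (N + 1) → R[X]}
    (hg : ∀ m, g m ∈ I) (hN : f ^ N = ∑ m, g m * f ^ (m : ℕ)) : f.eval p = 0 := by
  refine eq_zero_of_pow_eq_zero (n := N) ?_
  rw [← eval_pow_of_commute hf, hN, eval_finsetSum]
  refine Finset.sum_eq_zero fun m _ ↦ ?_
  have hcomm : Commute ((f ^ (m : ℕ)).eval p) p := by
    rw [eval_pow_of_commute hf]
    exact hf.pow_left _
  rw [eval_mul_of_semiconjBy hcomm, hp _ (hg m), zero_mul]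

/-- The left ideal `I + I f + I f² + ⋯`, the smallest one that contains `I` and is stable under
right multiplication by `f`. Its elements are encoded as the values at `f` of the polynomials over
`R` with coefficients in `I`. -/
def mulPowSpan (I : Ideal R) (f : R) : Ideal R where
  carrier := {a | ∃ q : R[X], (∀ m, q.coeff m ∈ I) ∧ q.eval f = a}
  zero_mem' := ⟨0, by simp, eval_zero⟩
  add_mem' := by
    rintro _ _ ⟨q₁, h₁, rfl⟩ ⟨q₂, h₂, rfl⟩
    exact ⟨q₁ + q₂, fun m ↦ by simpa using I.add_mem (h₁ m) (h₂ m), eval_add⟩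
  smul_mem' := by
    rintro r _ ⟨q, hq, rfl⟩
    exact ⟨C r * q, fun m ↦ by simpa using I.mul_mem_left r (hq m), eval_C_mul⟩

theorem mem_mulPowSpan {I : Ideal R} {f a : R} :
    a ∈ mulPowSpan I f ↔ ∃ q : R[X], (∀ m, q.coeff m ∈ I) ∧ q.eval f = a :=
  Iff.rfl

theorem le_mulPowSpan (I : Ideal R) (f : R) : I ≤ mulPowSpan I f := by
  refine fun a ha ↦ mem_mulPowSpan.mpr ⟨C a, fun m ↦ ?_, eval_C⟩
  rw [coeff_C]
  split_ifs
  exacts [ha, I.zero_mem]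

theorem mul_mem_mulPowSpan {I : Ideal R} {f a : R} (ha : a ∈ mulPowSpan I f) :
    a * f ∈ mulPowSpan I f := by
  obtain ⟨q, hq, rfl⟩ := mem_mulPowSpan.mp ha
  refine mem_mulPowSpan.mpr ⟨q * X, ?_, eval_mul_X⟩
  rintro (_ | m)
  · simp
  · simpa using hq m

theorem exists_pow_eq_sum_of_pow_mem_mulPowSpan {I : Ideal R} {f : R} {n : ℕ}
    (hn : f ^ n ∈ mulPowSpan I f) :
    ∃ N : ℕ, 1 ≤ N ∧ ∃ g : Fin (N + 1) → R, (∀ m, g m ∈ I) ∧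
      f ^ N = ∑ m : Fin (N + 1), g m * f ^ (m : ℕ) := by
  obtain ⟨q, hq, hqn⟩ := mem_mulPowSpan.mp hn
  let k := q.natDegree + 1
  refine ⟨k + n, by omega, fun m ↦ f ^ k * q.coeff m, fun m ↦ I.mul_mem_left _ (hq m), ?_⟩
  rw [Fin.sum_univ_eq_sum_range fun m ↦ f ^ k * q.coeff m * f ^ m, pow_add, ← hqn,
    eval_eq_sum_range' (n := k + n + 1) (by omega), Finset.mul_sum]
  simp only [mul_assoc]

end Semiring

section Ring

variable {R : Type*} [Ring R]

theorem exists_pow_sub_mul_pow_succ_mem (I : Ideal R) [IsArtinian R (R ⧸ I)] (f : R) :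
    ∃ (n : ℕ) (w : R), f ^ n - w * f ^ (n + 1) ∈ I := by
  let chain : ℕ →o (Submodule R (R ⧸ I))ᵒᵈ :=
    { toFun n := OrderDual.toDual (Submodule.span R {Submodule.Quotient.mk (f ^ n)})
      monotone' := monotone_nat_of_le_succ fun n ↦ by
        rw [OrderDual.toDual_le_toDual, Submodule.span_singleton_le_iff_mem,
          Submodule.mem_span_singleton]
        exact ⟨f, by rw [pow_succ', ← smul_eq_mul, Submodule.Quotient.mk_smul]⟩ }
  obtain ⟨n, hn⟩ := IsArtinian.monotone_stabilizes chain
  have hmem : (Submodule.Quotient.mk (f ^ n) : R ⧸ I) ∈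
      Submodule.span R {Submodule.Quotient.mk (f ^ (n + 1))} := by
    have hspan := congrArg OrderDual.ofDual (hn (n + 1) n.le_succ)
    exact hspan.le (Submodule.mem_span_singleton_self _)
  obtain ⟨w, hw⟩ := Submodule.mem_span_singleton.mp hmem
  exact ⟨n, w, (Submodule.Quotient.eq I).mp hw.symm⟩

theorem exists_pow_mem_of_mem_jacobson {I : Ideal R} [IsArtinian R (R ⧸ I)] {f : R}
    (hmul : ∀ a ∈ I, a * f ∈ I) (hf : f ∈ I.jacobson) : ∃ n : ℕ, f ^ n ∈ I := by
  have hmul_pow (k : ℕ) : ∀ a ∈ I, a * f ^ k ∈ I := by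
    induction k with
    | zero => simp
    | succ k ih => exact fun a ha ↦ by simpa only [pow_succ, mul_assoc] using hmul _ (ih a ha)
  obtain ⟨n, w, hw⟩ := exists_pow_sub_mul_pow_succ_mem I f
  obtain ⟨z, hz⟩ := Ideal.mem_jacobson_iff.mp hf (-w)
  have hdecomp : f ^ n =
      z * (f ^ n - w * f ^ (n + 1)) - (z * -w * f + z - 1) * f ^ n := by
    rw [pow_succ']
    noncomm_ring
  refine ⟨n, ?_⟩
  rw [hdecomp]
  exact I.sub_mem (I.mul_mem_left z hw) (hmul_pow n _ hz)

theorem jacobson_bot_polynomial [NoZeroDivisors R] : (⊥ : Ideal R[X]).jacobson = ⊥ := by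
  nontriviality R
  refine eq_bot_iff.mpr fun f hf ↦ ?_
  obtain ⟨z, hz⟩ := Ideal.mem_jacobson_iff.mp hf X
  have hz : z * (X * f + 1) = 1 := by
    rw [← sub_eq_zero, ← Ideal.mem_bot]
    simpa only [mul_add, mul_one, mul_assoc] using hz
  by_contra hf0
  have hdeg : (X * f + 1).natDegree = f.natDegree + 1 := by
    rw [← C_1, natDegree_add_C, natDegree_X_mul hf0]
  have hne : z ≠ 0 ∧ X * f + 1 ≠ 0 := by
    rw [← mul_ne_zero_iff, hz]
    exact one_ne_zero
  have := congrArg natDegree hz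
  rw [natDegree_mul hne.1 hne.2, hdeg, natDegree_one] at this
  omega

theorem ne_bot_of_isMaximal_polynomial [Nontrivial R] {Q : Ideal R[X]} (hQ : Q.IsMaximal) :
    Q ≠ ⊥ := by
  rintro rfl
  obtain ⟨f, i, hi, hf⟩ := hQ.exists_inv (x := X) (by simp)
  rw [(Submodule.mem_bot _).mp hi, add_zero] at hf
  simpa using congrArg (coeff · 0) hf

open MulOpposite in
theorem exists_eq_mul_add_degree_lt [Nontrivial R] {g : R[X]} (hg : g.Monic) (f : R[X]) :
    ∃ q r : R[X], f = q * g + r ∧ r.degree < g.degree := by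
  let φ := opRingEquiv R
  have hmonic : (φ (op g)).Monic := by simp [φ, Monic, hg.leadingCoeff]
  have hdegree (a : Rᵐᵒᵖ[X]) : (unop (φ.symm a)).degree = a.degree := by
    rw [degree, ← support_opRingEquiv]
    exact congrArg degree (φ.apply_symm_apply a)
  refine ⟨unop (φ.symm (φ (op f) /ₘ φ (op g))), unop (φ.symm (φ (op f) %ₘ φ (op g))), ?_, ?_⟩
  · have hdiv := congrArg (fun a ↦ unop (φ.symm a)) (modByMonic_add_div (φ (op f)) (φ (op g)))
    simpa [add_comm] using hdiv.symm
  · simpa only [hdegree, RingEquiv.symm_apply_apply, unop_op] using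
      (degree_modByMonic_lt (φ (op f)) hmonic).trans_eq (hdegree (φ (op g))).symm

theorem exists_eq_mul_X_sub_C_add_C_eval (f : R[X]) (a : R) :
    ∃ q : R[X], f = q * (X - C a) + C (f.eval a) := by
  nontriviality R
  obtain ⟨q, r, hf, hr⟩ := exists_eq_mul_add_degree_lt (monic_X_sub_C a) f
  rw [degree_X_sub_C, Nat.WithBot.lt_one_iff_le_zero] at hr
  obtain ⟨c, rfl⟩ : ∃ c, r = C c := ⟨_, eq_C_of_degree_le_zero hr⟩
  have hc : f.eval a = c := by rw [hf, eval_add, eval_mul_X_sub_C, eval_C, zero_add]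
  exact ⟨q, by rw [hc, ← hf]⟩

theorem finite_quotient_of_monic_mem {I : Ideal R[X]} {g : R[X]} (hg : g.Monic) (hgI : g ∈ I) :
    Module.Finite R (R[X] ⧸ I) := by
  nontriviality R
  have : Module.Finite R (degreeLT R g.natDegree) :=
    Module.Finite.equiv (degreeLTEquiv R g.natDegree).symm
  refine Module.Finite.of_surjective
    ((I.mkQ.restrictScalars R).comp (degreeLT R g.natDegree).subtype) fun y ↦ ?_
  obtain ⟨f, rfl⟩ := I.mkQ_surjective y
  obtain ⟨q, r, rfl, hr⟩ := exists_eq_mul_add_degree_lt hg f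
  refine ⟨⟨r, mem_degreeLT.mpr (hr.trans_le degree_le_natDegree)⟩, ?_⟩
  exact ((Submodule.Quotient.eq I).mpr (by simpa using I.mul_mem_left q hgI)).symm

end Ring

section DivisionRing

variable {D : Type*} [DivisionRing D]

theorem finite_quotient_of_ne_bot {I : Ideal D[X]} (hI : I ≠ ⊥) :
    Module.Finite D (D[X] ⧸ I) := by
  obtain ⟨g, hgI, hg⟩ := Submodule.exists_mem_ne_zero_of_ne_bot hI
  have hmonic : (C g.leadingCoeff⁻¹ * g).Monic :=
    monic_C_mul_of_mul_leadingCoeff_eq_one (inv_mul_cancel₀ (leadingCoeff_ne_zero.mpr hg))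
  exact finite_quotient_of_monic_mem hmonic (I.mul_mem_left _ hgI)

theorem mem_iff_eval_eq_zero_of_X_sub_C_mem {I : Ideal D[X]} (hI : I ≠ ⊤) {p : D}
    (hp : X - C p ∈ I) {f : D[X]} : f ∈ I ↔ f.eval p = 0 := by
  obtain ⟨q, hq⟩ := exists_eq_mul_X_sub_C_add_C_eval f p
  have hC : f ∈ I ↔ C (f.eval p) ∈ I := by
    conv_lhs => rw [hq]
    exact I.add_mem_iff_right (I.mul_mem_left q hp)
  refine hC.trans ⟨fun h ↦ ?_, fun h ↦ by simp [h]⟩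
  by_contra hne
  exact hI (I.eq_top_of_isUnit_mem h ((isUnit_iff_ne_zero.mpr hne).map C))

theorem exists_pow_mem_of_mem_jacobson_polynomial {I : Ideal D[X]} {f : D[X]}
    (hmul : ∀ a ∈ I, a * f ∈ I) (hf : f ∈ I.jacobson) : ∃ n : ℕ, f ^ n ∈ I := by
  obtain rfl | hI := eq_or_ne I ⊥
  · exact ⟨1, by rwa [pow_one, ← jacobson_bot_polynomial]⟩
  · have := finite_quotient_of_ne_bot hI
    have : IsArtinian D[X] (D[X] ⧸ I) := isArtinian_of_tower D inferInstance
    exact exists_pow_mem_of_mem_jacobson hmul hf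

theorem exists_X_sub_C_smul_one_mul_mem (K : Type*) [Field K] [IsAlgClosed K] [Module K D]
    [IsScalarTower K D D] [Module.Finite K D] {I : Ideal D[X]} (hbot : I ≠ ⊥) (htop : I ≠ ⊤) :
    ∃ k : K, ∃ v ∉ I, (X - C (k • 1)) * v ∈ I := by
  have := finite_quotient_of_ne_bot hbot
  have : Module.Finite K (D[X] ⧸ I) := Module.Finite.trans D _
  have : Nontrivial (D[X] ⧸ I) := Submodule.Quotient.nontrivial_iff.mpr htop
  let mulX : Module.End K (D[X] ⧸ I) :=
    { toFun y := (X : D[X]) • y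
      map_add' := smul_add X
      map_smul' k y := by
        obtain ⟨f, rfl⟩ := I.mkQ_surjective y
        have hcomm : X * k • f = k • (X * f) := by simp only [X_mul, smul_mul_assoc]
        exact congrArg I.mkQ hcomm }
  obtain ⟨k, hk⟩ := mulX.exists_eigenvalue
  obtain ⟨y, hy⟩ := hk.exists_hasEigenvector
  obtain ⟨v, rfl⟩ := I.mkQ_surjective y
  refine ⟨k, v, mt (Submodule.Quotient.mk_eq_zero I).mpr hy.2, ?_⟩
  have hXv : X * v - k • v ∈ I := (Submodule.Quotient.eq I).mp hy.apply_eq_smul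
  rwa [sub_mul, ← smul_C, C_1, smul_one_mul]

theorem exists_X_sub_C_mem_of_X_sub_C_mul_mem {Q : Ideal D[X]} (hQ : Q.IsMaximal) {c : D}
    {v : D[X]} (hv : v ∉ Q) (hcv : (X - C c) * v ∈ Q) : ∃ p : D, X - C p ∈ Q := by
  obtain ⟨r, i, hi, hri⟩ := hQ.exists_inv hv
  obtain ⟨q, hq⟩ := exists_eq_mul_X_sub_C_add_C_eval r c
  set d := r.eval c
  have hdv : C d * v - 1 ∈ Q := by
    have h : C d * v - 1 = -(q * ((X - C c) * v)) - i := by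
      rw [← hri, hq]
      noncomm_ring
    rw [h]
    exact Q.sub_mem (Q.neg_mem (Q.mul_mem_left q hcv)) hi
  have hd : d ≠ 0 := by
    intro hd
    rw [hd, C_0, zero_mul, zero_sub, Q.neg_mem_iff] at hdv
    exact hQ.ne_top (Q.eq_top_iff_one.mpr hdv)
  let p := d * c * d⁻¹
  have hconj : (X - C p) * C d = C d * (X - C c) := by
    rw [sub_mul, mul_sub, X_mul_C, ← C_mul, ← C_mul, inv_mul_cancel_right₀ hd]
  have hp : X - C p = C d * ((X - C c) * v) - (X - C p) * (C d * v - 1) := by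
    rw [← mul_assoc, ← hconj]
    noncomm_ring
  refine ⟨p, ?_⟩
  rw [hp]
  exact Q.sub_mem (Q.mul_mem_left _ hcv) (Q.mul_mem_left _ hdv)

theorem exists_X_sub_C_mem_of_isMaximal (K : Type*) [Field K] [IsAlgClosed K] [Module K D]
    [IsScalarTower K D D] [Module.Finite K D] {Q : Ideal D[X]} (hQ : Q.IsMaximal) :
    ∃ p : D, X - C p ∈ Q := by
  obtain ⟨k, v, hv, hkv⟩ :=
    exists_X_sub_C_smul_one_mul_mem K (ne_bot_of_isMaximal_polynomial hQ) hQ.ne_top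
  exact exists_X_sub_C_mem_of_X_sub_C_mul_mem hQ hv hkv

theorem mem_jacobson_of_eval_eq_zero (hroot : ∀ Q : Ideal D[X], Q.IsMaximal → ∃ p, X - C p ∈ Q)
    {I : Ideal D[X]} {f : D[X]} (hf : ∀ p ∈ leftZeroLocus I, f.eval p = 0) :
    f ∈ I.jacobson := by
  refine Ideal.mem_sInf.mpr fun {Q} ⟨hIQ, hQ⟩ ↦ ?_
  obtain ⟨p, hp⟩ := hroot Q hQ
  have hmem {g : D[X]} : g ∈ Q ↔ g.eval p = 0 := mem_iff_eval_eq_zero_of_X_sub_C_mem hQ.ne_top hp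
  exact hmem.mpr (hf p fun g hg ↦ hmem.mp (hIQ hg))

theorem exists_pow_eq_sum_of_eval_eq_zero
    (hroot : ∀ Q : Ideal D[X], Q.IsMaximal → ∃ p, X - C p ∈ Q)
    {I : Ideal D[X]} {f : D[X]} (hf : ∀ p ∈ leftZeroLocus I, f.eval p = 0) :
    ∃ N : ℕ, 1 ≤ N ∧ ∃ g : Fin (N + 1) → D[X], (∀ m, g m ∈ I) ∧
      f ^ N = ∑ m : Fin (N + 1), g m * f ^ (m : ℕ) := by
  have hjac : f ∈ (mulPowSpan I f).jacobson :=
    Ideal.jacobson_mono (le_mulPowSpan I f) (mem_jacobson_of_eval_eq_zero hroot hf)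
  obtain ⟨n, hn⟩ :=
    exists_pow_mem_of_mem_jacobson_polynomial (fun _ ↦ mul_mem_mulPowSpan) hjac
  exact exists_pow_eq_sum_of_pow_mem_mulPowSpan hn

end DivisionRing

theorem one_lt_finrank_centralizer_singleton {F A : Type*} [Field F] [Ring A] [Algebra F A]
    [FiniteDimensional F A] (hA : 1 < Module.finrank F A) (a : A) :
    1 < Module.finrank F (Subalgebra.centralizer F {a}) := by
  have : Nontrivial A := Module.nontrivial_of_finrank_pos (zero_lt_one.trans hA)
  refine lt_of_le_of_ne Module.finrank_pos fun h ↦ hA.ne' ?_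
  have hbot : Subalgebra.centralizer F {a} = ⊥ := Subalgebra.finrank_eq_one_iff.mp h.symm
  have ha : a ∈ (⊥ : Subalgebra F A) := by
    rw [← hbot]
    simp [Subalgebra.mem_centralizer_iff]
  obtain ⟨r, rfl⟩ := Algebra.mem_bot.mp ha
  rw [← Subalgebra.bot_eq_top_iff_finrank_eq_one, ← hbot, eq_top_iff]
  rintro x -
  simpa [Subalgebra.mem_centralizer_iff] using Algebra.commutes r x

section Quaternion

open scoped Quaternion

theorem exists_X_sub_C_mem_of_isMaximal_quaternion {Q : Ideal ℍ[ℝ][X]} (hQ : Q.IsMaximal) :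
    ∃ p : ℍ[ℝ], X - C p ∈ Q := by
  let : Module ℂ ℍ[ℝ] := Module.compHom ℍ[ℝ] (Quaternion.ofComplex : ℂ →+* ℍ[ℝ])
  have : IsScalarTower ℂ ℍ[ℝ] ℍ[ℝ] := ⟨fun _ _ _ ↦ mul_assoc _ _ _⟩
  have : IsScalarTower ℝ ℂ ℍ[ℝ] :=
    ⟨fun r z a ↦ by
      change Quaternion.ofComplex (r • z) * a = r • (Quaternion.ofComplex z * a)
      rw [map_smul, smul_mul_assoc]⟩
  have : Module.Finite ℂ ℍ[ℝ] := Module.Finite.of_restrictScalars_finite ℝ ℂ ℍ[ℝ]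
  exact exists_X_sub_C_mem_of_isMaximal ℂ hQ

theorem inv_norm_smul_sq_eq_neg_one {a : ℍ[ℝ]} (ha : a ≠ 0) (hre : a.re = 0) :
    (‖a‖⁻¹ • a) ^ 2 = -1 := by
  have hsq : a ^ 2 = -((‖a‖ ^ 2 : ℝ) : ℍ[ℝ]) := by
    rw [Quaternion.sq_eq_neg_normSq.mpr hre, Quaternion.normSq_eq_norm_mul_self, sq]
  rw [_root_.smul_pow, hsq, smul_neg, Quaternion.smul_coe, inv_pow,
    inv_mul_cancel₀ (pow_ne_zero 2 (norm_ne_zero_iff.mpr ha)), Quaternion.coe_one]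

theorem exists_sq_eq_neg_one_commute_mul (p : ℍ[ℝ]) {c : ℍ[ℝ]} (hc : c ≠ 0) :
    ∃ b : ℍ[ℝ], b ^ 2 = -1 ∧ Commute (b * c) p := by
  let Z := Subalgebra.centralizer ℝ {p}
  let φ : Z →ₗ[ℝ] ℝ :=
    QuaternionAlgebra.reₗ (-1) 0 (-1) ∘ₗ
      (LinearMap.mulRight ℝ c⁻¹ : ℍ[ℝ] →ₗ[ℝ] ℍ[ℝ]) ∘ₗ Z.val.toLinearMap
  have hZ : 1 < Module.finrank ℝ Z :=
    one_lt_finrank_centralizer_singleton (by rw [Quaternion.finrank_eq_four]; norm_num) p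
  obtain ⟨⟨u, huZ⟩, hu, hu0⟩ := Submodule.exists_mem_ne_zero_of_ne_bot
    (φ.ker_ne_bot_of_finrank_lt (by rwa [Module.finrank_self]))
  have hre : (u * c⁻¹).re = 0 := hu
  have hne : u * c⁻¹ ≠ 0 := mul_ne_zero (fun h ↦ hu0 (Subtype.ext h)) (inv_ne_zero hc)
  refine ⟨‖u * c⁻¹‖⁻¹ • (u * c⁻¹), inv_norm_smul_sq_eq_neg_one hne hre, ?_⟩
  rw [smul_mul_assoc, inv_mul_cancel_right₀ hc]
  have hcomm : Commute u p := ((Subalgebra.mem_centralizer_iff ℝ).mp huZ p rfl).symm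
  exact hcomm.smul_left _

end Quaternion

theorem nullstellensatz_quaternions_strengthened (I : Ideal (Polynomial (Quaternion ℝ)))
    (F : Polynomial (Quaternion ℝ)) :
    (∀ p : Quaternion ℝ, (∀ G ∈ I, G.eval p = 0) → F.eval p = 0) ↔
    (∀ b : Quaternion ℝ, b ^ 2 = -1 → ∃ N : ℕ, 1 ≤ N ∧
      ∃ G : Fin (N + 1) → Polynomial (Quaternion ℝ), (∀ m, G m ∈ I) ∧
        (C b * F) ^ N = ∑ m : Fin (N + 1), G m * (C b * F) ^ (m : ℕ)) := by
  constructor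
  · intro hF b _
    refine exists_pow_eq_sum_of_eval_eq_zero
      (fun _ ↦ exists_X_sub_C_mem_of_isMaximal_quaternion) fun p hp ↦ ?_
    rw [eval_C_mul, hF p hp, mul_zero]
  · intro hpow p hp
    by_contra hc
    obtain ⟨b, hb, hcomm⟩ := exists_sq_eq_neg_one_commute_mul p hc
    obtain ⟨N, -, G, hG, hN⟩ := hpow b hb
    have hb0 : b ≠ 0 := by
      rintro rfl
      simp at hb
    have hbF : b * F.eval p = 0 := by
      rw [← eval_C_mul]
      exact eval_eq_zero_of_pow_eq_sum hp (by rwa [eval_C_mul]) hG hN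
    exact (mul_ne_zero hb0 hc) hbF
end
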